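/- Let m₁, …, m_s ∈ ℚ be a finite family, let d = Σᵢ mᵢ, and write p_j = Σᵢ mᵢ^j for j = 3, 4, 5, 7, 8. Then e(dH)·( 1 − [ p₃H³/6 − p₄H⁴/8 + p₅H⁵/20 − p₃²H⁶/72 + (7p₃p₄ − 6p₇)H⁷/336 − (15p₄² + 16p₃p₅ − 30p₈)H⁸/1920 ] ) ≡ ∏ᵢ (1 + mᵢH + mᵢ²H²/2) (mod H⁹). (This is the computation of Example 3.1 of the paper: the adjusted predegree polynomial of a union of lines with multiplicities mᵢ, no three meeting in a point, is the product of the individual factors.) -/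

import Mathlib

open Polynomial

/-- The truncated exponential `e(dH) = ∑_{i=0}^{8} dⁱHⁱ/i!` in `ℚ[H]`. -/
noncomputable def eH (d : ℚ) : Polynomial ℚ :=
  ∑ i ∈ Finset.range 9, C (d ^ i / (Nat.factorial i : ℚ)) * X ^ i

/-- The bracketed correction factor, as a function of the power sums. -/
noncomputable def corr (p3 p4 p5 p7 p8 : ℚ) : Polynomial ℚ :=
  1 - (C (p3 / 6) * X ^ 3 - C (p4 / 8) * X ^ 4 + C (p5 / 20) * X ^ 5
    - C (p3 ^ 2 / 72) * X ^ 6 + C ((7 * p3 * p4 - 6 * p7) / 336) * X ^ 7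
    - C ((15 * p4 ^ 2 + 16 * p3 * p5 - 30 * p8) / 1920) * X ^ 8)

lemma eH_coeff (d : ℚ) (k : ℕ) (hk : k ≤ 8) :
    (eH d).coeff k = d ^ k / (Nat.factorial k : ℚ) := by
  unfold eH
  rw [finset_sum_coeff]
  simp only [coeff_C_mul_X_pow]
  rw [Finset.sum_ite_eq]
  simp [Nat.lt_succ_of_le hk]

lemma corr_coeff (p3 p4 p5 p7 p8 : ℚ) (k : ℕ) :
    (corr p3 p4 p5 p7 p8).coeff k =
      (if k = 0 then 1 else 0) - ((if k = 3 then p3 / 6 else 0) - (if k = 4 then p4 / 8 else 0)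
      + (if k = 5 then p5 / 20 else 0) - (if k = 6 then p3 ^ 2 / 72 else 0)
      + (if k = 7 then (7 * p3 * p4 - 6 * p7) / 336 else 0)
      - (if k = 8 then (15 * p4 ^ 2 + 16 * p3 * p5 - 30 * p8) / 1920 else 0)) := by
  unfold corr
  simp only [coeff_sub, coeff_add, coeff_C_mul_X_pow, coeff_one]

lemma prod_coeff (d p3 p4 p5 p7 p8 : ℚ) (k : ℕ) (hk : k ≤ 8) :
    (eH d * corr p3 p4 p5 p7 p8).coeff k =
      ∑ j ∈ Finset.range (k + 1),
        d ^ j / (Nat.factorial j : ℚ) * (corr p3 p4 p5 p7 p8).coeff (k - j) := by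
  rw [coeff_mul, Finset.Nat.sum_antidiagonal_eq_sum_range_succ_mk]
  refine Finset.sum_congr rfl fun j hj => ?_
  rw [eH_coeff _ _ (by have := Finset.mem_range.1 hj; omega)]

lemma quad_coeff (P : Polynomial ℚ) (a : ℚ) (k : ℕ) :
    ((1 + C a * X + C (a ^ 2 / 2) * X ^ 2) * P).coeff k =
      P.coeff k + a * (if 1 ≤ k then P.coeff (k - 1) else 0)
        + a ^ 2 / 2 * (if 2 ≤ k then P.coeff (k - 2) else 0) := by
  have h : (1 + C a * X + C (a ^ 2 / 2) * X ^ 2) * P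
      = P + C a * (P * X ^ 1) + C (a ^ 2 / 2) * (P * X ^ 2) := by ring
  rw [h]
  simp only [coeff_add, coeff_C_mul, coeff_mul_X_pow']

lemma step (a d p3 p4 p5 p7 p8 : ℚ) (k : ℕ) (hk : k ≤ 8) :
    (eH (a + d) * corr (a ^ 3 + p3) (a ^ 4 + p4) (a ^ 5 + p5) (a ^ 7 + p7) (a ^ 8 + p8)).coeff k
    = (eH d * corr p3 p4 p5 p7 p8).coeff k
      + a * (if 1 ≤ k then (eH d * corr p3 p4 p5 p7 p8).coeff (k - 1) else 0)
      + a ^ 2 / 2 * (if 2 ≤ k then (eH d * corr p3 p4 p5 p7 p8).coeff (k - 2) else 0) := by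
  rw [prod_coeff _ _ _ _ _ _ k hk, prod_coeff _ _ _ _ _ _ k hk,
    prod_coeff _ _ _ _ _ _ (k - 1) (by omega), prod_coeff _ _ _ _ _ _ (k - 2) (by omega)]
  simp only [corr_coeff]
  interval_cases k <;> simp [Finset.sum_range_succ, Nat.factorial] <;> ring

lemma main_finset {ι : Type*} (m : ι → ℚ) (s : Finset ι) :
    ∀ k ≤ 8, (eH (∑ i ∈ s, m i) * corr (∑ i ∈ s, m i ^ 3) (∑ i ∈ s, m i ^ 4) (∑ i ∈ s, m i ^ 5)
      (∑ i ∈ s, m i ^ 7) (∑ i ∈ s, m i ^ 8)).coeff k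
      = (∏ i ∈ s, (1 + C (m i) * X + C ((m i) ^ 2 / 2) * X ^ 2)).coeff k := by
  classical
  induction s using Finset.induction_on with
  | empty =>
    intro k hk
    rw [prod_coeff _ _ _ _ _ _ k hk]
    simp only [corr_coeff, Finset.prod_empty, coeff_one, Finset.sum_empty]
    interval_cases k <;> simp [Finset.sum_range_succ]
  | insert a s ha ih =>
    intro k hk
    rw [Finset.prod_insert ha, quad_coeff, ← ih k hk, ← ih (k - 1) (by omega),
      ← ih (k - 2) (by omega)]
    simp only [Finset.sum_insert ha]
    exact step _ _ _ _ _ _ _ k hk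

/-- Example 3.1: the adjusted predegree polynomial of a union of lines with multiplicities
`mᵢ`, no three meeting in a point, is the product of the individual factors, modulo `H⁹`. -/
theorem stmt_6 {ι : Type*} [Fintype ι] (m : ι → ℚ) (d : ℚ) (hd : d = ∑ i, m i) :
    ∀ k ≤ 8,
      (eH d * (1 - (C ((∑ i, (m i) ^ 3) / 6) * X ^ 3 - C ((∑ i, (m i) ^ 4) / 8) * X ^ 4
          + C ((∑ i, (m i) ^ 5) / 20) * X ^ 5
          - C ((∑ i, (m i) ^ 3) ^ 2 / 72) * X ^ 6
          + C ((7 * (∑ i, (m i) ^ 3) * (∑ i, (m i) ^ 4) - 6 * (∑ i, (m i) ^ 7)) / 336) * X ^ 7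
          - C ((15 * (∑ i, (m i) ^ 4) ^ 2 + 16 * (∑ i, (m i) ^ 3) * (∑ i, (m i) ^ 5)
              - 30 * (∑ i, (m i) ^ 8)) / 1920) * X ^ 8))).coeff k
      = (∏ i, (1 + C (m i) * X + C ((m i) ^ 2 / 2) * X ^ 2)).coeff k := by
  subst hd
  exact main_finset m Finset.univ
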